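/- arXiv:1811.01229 — 6 statements merged into one kernel-verified Lean document; each statement's English description precedes it below -/
import Mathlib

section
/- Let m ≥ 1 and let a_1, …, a_{2m} be positive integers. Then M⁺(a_1, …, a_{2m}) = M(a_1+1, 2^{(a_2−1)}, a_3+2, 2^{(a_4−1)}, …, a_{2m−1}+2, 2^{(a_{2m}−1)}) · R, where R = [[1,1],[0,1]]. -/
/-- `M(c₁, …, c_n) = [[c₁,−1],[1,0]] ⋯ [[c_n,−1],[1,0]]`. -/
def Mneg (cs : List ℤ) : Matrix (Fin 2) (Fin 2) ℤ :=
  (cs.map fun c => !![c, -1; 1, 0]).prod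

/-- `M⁺(a₁, …, a_k) = [[a₁,1],[1,0]] ⋯ [[a_k,1],[1,0]]`. -/
def Mpos (as : List ℤ) : Matrix (Fin 2) (Fin 2) ℤ :=
  (as.map fun a => !![a, 1; 1, 0]).prod

/-- Auxiliary: converts `(a₁, a₂, a₃, …)` to `(a₁+2, 2^(a₂−1), a₃+2, 2^(a₄−1), …)`. -/
def hzTail : List ℤ → List ℤ
  | [] => []
  | [a] => [a + 2]
  | a :: b :: l => (a + 2) :: (List.replicate (b - 1).toNat 2 ++ hzTail l)

/-- The Hirzebruch conversion:
`(a₁, a₂, a₃, a₄, …) ↦ (a₁+1, 2^(a₂−1), a₃+2, 2^(a₄−1), …)`. -/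
def hz : List ℤ → List ℤ
  | [] => []
  | [a] => [a + 1]
  | a :: b :: l => (a + 1) :: (List.replicate (b - 1).toNat 2 ++ hzTail l)

/-!
Put `N = [[2, -1], [1, 0]]` and `R = [[1, 1], [0, 1]]`. Since `N - 1` squares to zero, `N ^ t` is
affine in `t`, which gives the two-term identity `M⁺(a, t + 1) = M(a + 1, 2^(t)) R`. Left
multiplication by `R` raises the first entry of `M(c₁, …)` by one. So the factor `R` left over by a
pair is absorbed by the next pair, turning its `a + 1` into `a + 2`: by induction
`R M⁺(a₁, …, a_{2m}) = M(a₁ + 2, 2^(a₂ - 1), a₃ + 2, …) R`, and cancelling `R` on the left lowers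
the first entry to `a₁ + 1`.
-/

section Ring

variable {A : Type*} [Ring A]

/-- The factor `[[c, -1], [1, 0]]` of the products `M`, over any ring. -/
def negStep (c : A) : Matrix (Fin 2) (Fin 2) A := !![c, -1; 1, 0]

/-- The factor `[[a, 1], [1, 0]]` of the products `M⁺`, over any ring. -/
def posStep (a : A) : Matrix (Fin 2) (Fin 2) A := !![a, 1; 1, 0]

variable (A) in
/-- The matrix `R = [[1, 1], [0, 1]]`, over any ring `A`, by which `M` and `M⁺` differ. -/
def upperShear : Matrix (Fin 2) (Fin 2) A := !![1, 1; 0, 1]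

theorem negStep_two_pow (t : ℕ) :
    negStep (2 : A) ^ t = !![(t : A) + 1, -t; t, 1 - t] := by
  induction t with
  | zero => simp [Matrix.one_fin_two]
  | succ t ih =>
    rw [pow_succ, ih, negStep, Matrix.mul_fin_two]
    push_cast
    congrm !![?_, ?_; ?_, ?_] <;> noncomm_ring

theorem posStep_mul_posStep_natCast_add_one (a : A) (t : ℕ) :
    posStep a * posStep (t + 1 : A) = negStep (a + 1) * negStep 2 ^ t * upperShear A := by
  rw [negStep_two_pow, posStep, posStep, negStep, upperShear]
  simp only [Matrix.mul_fin_two]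
  congrm !![?_, ?_; ?_, ?_] <;> noncomm_ring

theorem upperShear_mul_negStep (c : A) : upperShear A * negStep c = negStep (c + 1) := by
  simp [upperShear, negStep]

theorem isUnit_upperShear : IsUnit (upperShear A) :=
  isUnit_iff_exists.mpr ⟨!![1, -1; 0, 1], by simp [upperShear, Matrix.one_fin_two],
    by simp [upperShear, Matrix.one_fin_two]⟩

end Ring

theorem Mpos_cons (a : ℤ) (l : List ℤ) : Mpos (a :: l) = posStep a * Mpos l :=
  List.prod_cons

theorem Mneg_cons (c : ℤ) (l : List ℤ) : Mneg (c :: l) = negStep c * Mneg l :=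
  List.prod_cons

theorem Mneg_append (l₁ l₂ : List ℤ) : Mneg (l₁ ++ l₂) = Mneg l₁ * Mneg l₂ := by
  simp only [Mneg, List.map_append, List.prod_append]

theorem Mneg_replicate (t : ℕ) (c : ℤ) : Mneg (List.replicate t c) = negStep c ^ t := by
  simp only [Mneg, negStep, List.map_replicate, List.prod_replicate]

theorem Mpos_cons_cons (a : ℤ) {b : ℤ} (hb : 1 ≤ b) (l : List ℤ) :
    Mpos (a :: b :: l) =
      Mneg ((a + 1) :: List.replicate (b - 1).toNat 2) * upperShear ℤ * Mpos l := by
  have hcast : ((b - 1).toNat : ℤ) + 1 = b := by omega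
  rw [Mneg_cons, Mneg_replicate, ← posStep_mul_posStep_natCast_add_one, hcast, mul_assoc,
    Mpos_cons, Mpos_cons]

theorem upperShear_mul_Mneg_cons (c : ℤ) (l : List ℤ) :
    upperShear ℤ * Mneg (c :: l) = Mneg ((c + 1) :: l) := by
  rw [Mneg_cons, Mneg_cons, ← mul_assoc, upperShear_mul_negStep]

theorem upperShear_mul_Mneg_hz {l : List ℤ} (hl : l ≠ []) :
    upperShear ℤ * Mneg (hz l) = Mneg (hzTail l) := by
  match l, hl with
  | [_], _ | _ :: _ :: _, _ =>
    rw [hz, hzTail, upperShear_mul_Mneg_cons, add_assoc, one_add_one_eq_two]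

theorem upperShear_mul_Mpos {l : List ℤ} (hlen : Even l.length)
    (hl : ∀ i (hi : 2 * i + 1 < l.length), 1 ≤ l[2 * i + 1]) :
    upperShear ℤ * Mpos l = Mneg (hzTail l) * upperShear ℤ := by
  induction l using hzTail.induct with
  | case1 => simp [Mpos, Mneg, hzTail]
  | case2 => simp at hlen
  | case3 a b l ih =>
    have hb : 1 ≤ b := hl 0 (by simp)
    have htail : upperShear ℤ * Mpos l = Mneg (hzTail l) * upperShear ℤ :=
      ih (by simpa [Nat.even_add_one] using hlen)
        fun i hi => hl (i + 1) (by simp only [List.length_cons]; omega)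
    calc upperShear ℤ * Mpos (a :: b :: l)
        = upperShear ℤ * Mneg ((a + 1) :: List.replicate (b - 1).toNat 2) *
            (upperShear ℤ * Mpos l) := by
          simp only [Mpos_cons_cons a hb, mul_assoc]
      _ = Mneg ((a + 2) :: List.replicate (b - 1).toNat 2) *
            (Mneg (hzTail l) * upperShear ℤ) := by
          rw [upperShear_mul_Mneg_cons, add_assoc, one_add_one_eq_two, htail]
      _ = Mneg (hzTail (a :: b :: l)) * upperShear ℤ := by
          rw [hzTail, ← List.cons_append, Mneg_append, mul_assoc]

-- Lists are indexed from `0`: `a[2 * i + 1]` is the entry of even index `2 * i + 2` in `a₁, a₂, …`.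
theorem stmt2_general {a : List ℤ} (hne : a ≠ []) (hlen : Even a.length)
    (ha : ∀ i (hi : 2 * i + 1 < a.length), 1 ≤ a[2 * i + 1]) :
    Mpos a = Mneg (hz a) * !![1, 1; 0, 1] := by
  change Mpos a = Mneg (hz a) * upperShear ℤ
  apply isUnit_upperShear.mul_left_cancel
  rw [upperShear_mul_Mpos hlen ha, ← mul_assoc, upperShear_mul_Mneg_hz hne]

/-- for positive integers `a₁, …, a_{2m}` (`m ≥ 1`),
`M⁺(a₁, …, a_{2m}) = M(a₁+1, 2^(a₂−1), a₃+2, 2^(a₄−1), …, a_{2m−1}+2, 2^(a_{2m}−1)) · R`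
where `R = [[1,1],[0,1]]`. -/
theorem stmt2 (m : ℕ) (hm : 1 ≤ m) (a : List ℤ) (hlen : a.length = 2 * m)
    (ha : ∀ x ∈ a, 1 ≤ x) :
    Mpos a = Mneg (hz a) * !![1, 1; 0, 1] :=
  stmt2_general (List.length_pos_iff.mp (by omega)) (hlen ▸ even_two_mul m)
    fun _ _ => ha _ (List.getElem_mem _)
end

section
/- Let m ≥ 1 and let a_1, …, a_{2m} be positive integers, and let R = [[1,1],[0,1]]. Then R · M⁺(a_1, …, a_{2m}) · R^{−1} = M(a_1+2, 2^{(a_2−1)}, a_3+2, 2^{(a_4−1)}, …, a_{2m−1}+2, 2^{(a_{2m}−1)}); in particular, M⁺(a_1, …, a_{2m}) is conjugate in SL(2,ℤ) to M(a_1+2, 2^{(a_2−1)}, …, a_{2m−1}+2, 2^{(a_{2m}−1)}). -/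
/-- The conversion `(a₁, a₂, a₃, a₄, …) ↦ (a₁+2, 2^(a₂−1), a₃+2, 2^(a₄−1), …)`. -/
def hzConj : List ℤ → List ℤ
  | [] => []
  | [a] => [a + 2]
  | a :: b :: l => (a + 2) :: (List.replicate (b - 1).toNat 2 ++ hzConj l)

/-!
Put `U x = [[1,x],[0,1]]`, `L = [[1,0],[1,1]]` and `N = [[2,-1],[1,0]]`, so that `R = U 1`. Then
`[[x,1],[1,0]] * [[y,1],[1,0]] = U x * L ^ y`. Since `R` commutes with `U x` and
`R * L * R⁻¹ = N`, conjugation by `R` turns this product into `U x * N ^ y`, which is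
`[[x+2,-1],[1,0]] * N ^ (y-1)` because `U x * N = [[x+2,-1],[1,0]]`. The theorem is the product of
these identities over the consecutive pairs `(a₁, a₂), (a₃, a₄), …`.
-/

/-- The upper unitriangular matrix `[[1,x],[0,1]]`; the matrix `R` of the theorem is
`upperUnipotent 1`. -/
def upperUnipotent {S : Type*} [Zero S] [One S] (x : S) : Matrix (Fin 2) (Fin 2) S :=
  !![1, x; 0, 1]

/-- The lower unitriangular matrix `[[1,0],[y,1]]`. Its powers absorb the entries `a₂, a₄, …`, which
occur as exponents in the factorization of `M⁺`. -/
def lowerUnipotent {S : Type*} [Zero S] [One S] (y : S) : Matrix (Fin 2) (Fin 2) S :=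
  !![1, 0; y, 1]

section Semiring

variable {S : Type*} [Semiring S]

theorem upperUnipotent_mul_upperUnipotent (x y : S) :
    upperUnipotent x * upperUnipotent y = upperUnipotent (x + y) := by
  simp [upperUnipotent, add_comm]

theorem commute_upperUnipotent (x y : S) : Commute (upperUnipotent x) (upperUnipotent y) := by
  rw [commute_iff_eq, upperUnipotent_mul_upperUnipotent, upperUnipotent_mul_upperUnipotent,
    add_comm]

theorem lowerUnipotent_mul_lowerUnipotent (x y : S) :
    lowerUnipotent x * lowerUnipotent y = lowerUnipotent (x + y) := by
  simp [lowerUnipotent]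

theorem lowerUnipotent_pow (y : S) (n : ℕ) : lowerUnipotent y ^ n = lowerUnipotent (n * y) := by
  induction n with
  | zero => simp [lowerUnipotent, Matrix.one_fin_two]
  | succ n ih => rw [pow_succ, ih, lowerUnipotent_mul_lowerUnipotent, Nat.cast_succ, add_one_mul]

theorem upperUnipotent_mul_lowerUnipotent (x y : S) :
    upperUnipotent x * lowerUnipotent y = !![x, 1; 1, 0] * !![y, 1; 1, 0] := by
  simp [upperUnipotent, lowerUnipotent, add_comm]

end Semiring

section Ring

variable {S : Type*} [Ring S]

theorem semiconjBy_upperUnipotent_one_lowerUnipotent_one :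
    SemiconjBy (upperUnipotent (1 : S)) (lowerUnipotent 1) !![2, -1; 1, 0] := by
  norm_num [SemiconjBy, upperUnipotent, lowerUnipotent]

theorem upperUnipotent_mul_two_neg_one (x : S) :
    upperUnipotent x * !![2, -1; 1, 0] = !![x + 2, -1; 1, 0] := by
  simp [upperUnipotent, add_comm]

end Ring

theorem mpos_append (as bs : List ℤ) : Mpos (as ++ bs) = Mpos as * Mpos bs := by
  simp only [Mpos, List.map_append, List.prod_append]

theorem mneg_append (cs ds : List ℤ) : Mneg (cs ++ ds) = Mneg cs * Mneg ds := by
  simp only [Mneg, List.map_append, List.prod_append]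

theorem mpos_pair_natCast (x : ℤ) (n : ℕ) :
    Mpos [x, n] = upperUnipotent x * lowerUnipotent 1 ^ n := by
  rw [lowerUnipotent_pow, mul_one, upperUnipotent_mul_lowerUnipotent]
  simp only [Mpos, List.map_cons, List.map_nil, List.prod_cons, List.prod_nil, mul_one]

theorem mneg_cons_replicate_two (x : ℤ) (n : ℕ) :
    Mneg ((x + 2) :: List.replicate n 2) = upperUnipotent x * !![2, -1; 1, 0] ^ (n + 1) := by
  rw [pow_succ', ← mul_assoc, upperUnipotent_mul_two_neg_one]
  simp only [Mneg, List.map_cons, List.map_replicate, List.prod_cons, List.prod_replicate]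

theorem semiconjBy_upperUnipotent_one_mpos_pair (x : ℤ) {y : ℤ} (hy : 1 ≤ y) :
    SemiconjBy (upperUnipotent 1) (Mpos [x, y])
      (Mneg ((x + 2) :: List.replicate (y - 1).toNat 2)) := by
  obtain ⟨n, rfl⟩ : ∃ n : ℕ, y = (n + 1 : ℕ) := ⟨(y - 1).toNat, by omega⟩
  have hn : ((n + 1 : ℕ) - 1 : ℤ).toNat = n := by omega
  rw [hn, mpos_pair_natCast, mneg_cons_replicate_two]
  exact (commute_upperUnipotent 1 x).semiconjBy.mul_right
    (semiconjBy_upperUnipotent_one_lowerUnipotent_one.pow_right (n + 1))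

/- With the `0`-based indexing of lists, the odd positions hold the entries `a₂, a₄, …, a_{2m}`. -/
theorem semiconjBy_upperUnipotent_one_mpos (a : List ℤ) (hlen : Even a.length)
    (hpos : ∀ i (hi : i < a.length), Odd i → 1 ≤ a[i]) :
    SemiconjBy (upperUnipotent 1) (Mpos a) (Mneg (hzConj a)) := by
  induction a using hzConj.induct with
  | case1 => exact SemiconjBy.one_right _
  | case2 x => simp at hlen
  | case3 x y l ih =>
    have hy : 1 ≤ y := hpos 1 (by simp) odd_one
    have hl : SemiconjBy (upperUnipotent 1) (Mpos l) (Mneg (hzConj l)) := by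
      refine ih (by simpa [Nat.even_add] using hlen) fun i hi hodd => ?_
      exact hpos (i + 2) (by simpa using hi) (hodd.add_even even_two)
    have hpair := (semiconjBy_upperUnipotent_one_mpos_pair x hy).mul_right hl
    rwa [← mpos_append, ← mneg_append] at hpair

theorem stmt6_general (a : List ℤ) (hlen : Even a.length)
    (hpos : ∀ i (hi : i < a.length), Odd i → 1 ≤ a[i]) :
    !![1, 1; 0, 1] * Mpos a * (!![1, 1; 0, 1] : Matrix (Fin 2) (Fin 2) ℤ)⁻¹
      = Mneg (hzConj a) := by
  have hdet : IsUnit (!![1, 1; 0, 1] : Matrix (Fin 2) (Fin 2) ℤ).det := by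
    simp [Matrix.det_fin_two]
  have hconj : !![1, 1; 0, 1] * Mpos a = Mneg (hzConj a) * !![1, 1; 0, 1] :=
    semiconjBy_upperUnipotent_one_mpos a hlen hpos
  rw [hconj, Matrix.mul_nonsing_inv_cancel_right _ _ hdet]

/-- for positive integers `a₁, …, a_{2m}` (`m ≥ 1`) and
`R = [[1,1],[0,1]]`,
`R · M⁺(a₁, …, a_{2m}) · R⁻¹ = M(a₁+2, 2^(a₂−1), a₃+2, 2^(a₄−1), …, a_{2m−1}+2, 2^(a_{2m}−1))`,
so that `M⁺(a₁, …, a_{2m})` is conjugate in `SL(2,ℤ)` to the latter matrix. -/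
theorem stmt6 (m : ℕ) (hm : 1 ≤ m) (a : List ℤ) (hlen : a.length = 2 * m)
    (ha : ∀ x ∈ a, 1 ≤ x) :
    !![1, 1; 0, 1] * Mpos a * (!![1, 1; 0, 1] : Matrix (Fin 2) (Fin 2) ℤ)⁻¹
      = Mneg (hzConj a) := by
  exact stmt6_general a ⟨m, by omega⟩ fun i hi _ => ha _ (List.getElem_mem hi)
end

section
/- Let n ≥ 3 and let x : {1, …, n} × {1, …, n} → ℤ satisfy x_{i,i} = 0 for all i, x_{i,i+1} = 1 for 1 ≤ i ≤ n−1, and the Ptolemy–Plücker relations x_{i,j}·x_{k,ℓ} = x_{i,k}·x_{j,ℓ} + x_{i,ℓ}·x_{k,j} for all 1 ≤ i ≤ k ≤ j ≤ ℓ ≤ n. Set c_t = x_{t−1,t+1} for 2 ≤ t ≤ n−1. Then for all 2 ≤ i ≤ j ≤ n−1 one has x_{i−1,j+1} = K_{j−i+1}(c_i, …, c_j). -/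
/-- Continuants of the sequence `c t, c (t+1), …`, with an index shift
absorbing `K₋₁`: `cont c t m = K_{m−1}(c t, …, c (t+m−2))`; so
`cont c t 0 = K₋₁ = 0`, `cont c t 1 = K₀ = 1`, and
`K_i = c_{t+i−1}·K_{i−1} − K_{i−2}`. -/
def cont (c : ℕ → ℤ) (t : ℕ) : ℕ → ℤ
  | 0 => 0
  | 1 => 1
  | m + 2 => c (t + m) * cont c t (m + 1) - cont c t m

/-! Since adjacent entries equal `1`, the Ptolemy–Plücker relation for the indices
`i < k < k + 1 < k + 2` is the recurrence `x_{i,k+2} = c_{k+1}·x_{i,k+1} − x_{i,k}` along row `i`.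
Row `i` starts with `x_{i,i+1} = 1 = K₀` and `x_{i,i+2} = c_{i+1} = K₁(c_{i+1})`, so its entries are
the continuants. -/

section Continuant

variable {R : Type*} [Ring R]

/-- The continuant `K_m(c t, …, c (t + m - 1))` over a ring, indexed by the length `m`
of the sequence; unlike in `cont`, the index is not shifted to include `K₋₁`. -/
def continuant (c : ℕ → R) (t : ℕ) : ℕ → R
  | 0 => 1
  | 1 => c t
  | m + 2 => c (t + m + 1) * continuant c t (m + 1) - continuant c t m

theorem eq_continuant_of_recurrence {c u : ℕ → R} {t N : ℕ} (h_zero : u 0 = 1) (h_one : u 1 = c t)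
    (h_rec : ∀ m, m + 2 ≤ N → u (m + 2) = c (t + m + 1) * u (m + 1) - u m) :
    ∀ m ≤ N, u m = continuant c t m
  | 0, _ => h_zero
  | 1, _ => h_one
  | m + 2, hm => by
    rw [h_rec m hm, continuant,
      eq_continuant_of_recurrence h_zero h_one h_rec (m + 1) (by omega),
      eq_continuant_of_recurrence h_zero h_one h_rec m (by omega)]

theorem cont_succ_eq_continuant (c : ℕ → ℤ) (t m : ℕ) : cont c t (m + 1) = continuant c t m :=
  eq_continuant_of_recurrence (u := fun m => cont c t (m + 1)) rfl (by simp [cont])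
    (fun _ _ => rfl) m le_rfl

end Continuant

section PtolemyPlucker

variable {R : Type*} [CommRing R]

theorem row_recurrence_of_plucker {x : ℕ → ℕ → R} {i k : ℕ}
    (h_left : x k (k + 1) = 1) (h_right : x (k + 1) (k + 2) = 1)
    (hPP : x i (k + 1) * x k (k + 2) = x i k * x (k + 1) (k + 2) + x i (k + 2) * x k (k + 1)) :
    x i (k + 2) = x k (k + 2) * x i (k + 1) - x i k := by
  rw [h_left, h_right, mul_one, mul_one] at hPP
  rw [mul_comm, hPP, add_sub_cancel_left]

theorem stmt14_general (n : ℕ) (x : ℕ → ℕ → R)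
    (hadj : ∀ i, 1 ≤ i → i + 1 ≤ n → x i (i + 1) = 1)
    (hPP : ∀ i k, 1 ≤ i → i < k → k + 2 ≤ n →
      x i (k + 1) * x k (k + 2) = x i k * x (k + 1) (k + 2) + x i (k + 2) * x k (k + 1)) :
    ∀ i j, 2 ≤ i → i ≤ j → j + 1 ≤ n →
      x (i - 1) (j + 1) = continuant (fun t => x (t - 1) (t + 1)) i (j - i + 1) := by
  intro i j hi hij hj
  have h_start : x (i - 1) i = 1 := by
    simpa only [Nat.sub_add_cancel (show 1 ≤ i by omega)] using hadj (i - 1) (by omega) (by omega)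
  have h_rec : ∀ m, m + 2 ≤ n - i →
      x (i - 1) (i + m + 2) = x (i + m) (i + m + 2) * x (i - 1) (i + m + 1) - x (i - 1) (i + m) :=
    fun m hm => row_recurrence_of_plucker (hadj (i + m) (by omega) (by omega))
      (hadj (i + m + 1) (by omega) (by omega))
      (hPP (i - 1) (i + m) (by omega) (by omega) (by omega))
  have h_row : x (i - 1) (i + (j - i + 1)) =
      continuant (fun t => x (t - 1) (t + 1)) i (j - i + 1) :=
    eq_continuant_of_recurrence (c := fun t => x (t - 1) (t + 1)) (t := i)
      (u := fun m => x (i - 1) (i + m)) h_start rfl h_rec _ (by omega)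
  rwa [← Nat.add_assoc, Nat.add_sub_cancel' hij] at h_row

end PtolemyPlucker

/-- Let `n ≥ 3` and let `x : {1,…,n}² → ℤ` satisfy `x_{i,i} = 0`,
`x_{i,i+1} = 1` for `1 ≤ i ≤ n−1`, and the Ptolemy–Plücker relations
`x_{i,j}·x_{k,ℓ} = x_{i,k}·x_{j,ℓ} + x_{i,ℓ}·x_{k,j}` for
`1 ≤ i ≤ k ≤ j ≤ ℓ ≤ n`. Setting `c_t = x_{t−1,t+1}`, for all
`2 ≤ i ≤ j ≤ n−1` one has `x_{i−1,j+1} = K_{j−i+1}(c_i, …, c_j)`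
(which is `cont c i (j−i+2)`). -/
theorem stmt14 (n : ℕ) (hn : 3 ≤ n) (x : ℕ → ℕ → ℤ)
    (hdiag : ∀ i, 1 ≤ i → i ≤ n → x i i = 0)
    (hadj : ∀ i, 1 ≤ i → i + 1 ≤ n → x i (i + 1) = 1)
    (hPP : ∀ i k j l, 1 ≤ i → i ≤ k → k ≤ j → j ≤ l → l ≤ n →
      x i j * x k l = x i k * x j l + x i l * x k j) :
    ∀ i j, 2 ≤ i → i ≤ j → j + 1 ≤ n →
      x (i - 1) (j + 1) = cont (fun t => x (t - 1) (t + 1)) i (j - i + 2) := by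
  intro i j hi hij hj
  rw [cont_succ_eq_continuant]
  exact stmt14_general n x hadj (fun i k hi hik hk =>
    hPP i k (k + 1) (k + 2) hi hik.le (by omega) (by omega) hk) i j hi hij hj
end

section
/- Let n ≥ 3 and let c_1, …, c_n be positive integers. The following system has a unique solution x : {1, …, n} × {1, …, n} → ℤ if and only if M(c_1, …, c_n) = −Id: (a) symmetry x_{i,j} = x_{j,i}; (b) x_{i,i} = 0 for all i; (c) x_{i,i+1} = 1 for 1 ≤ i ≤ n−1 and x_{1,n} = 1 (cyclic convention); (d) x_{i−1,i+1} = c_i for all i, indices taken modulo n (i.e. x_{i−1,i+1} = c_i for 2 ≤ i ≤ n−1, x_{n,2} = c_1, x_{n−1,1} = c_n); (e) the Ptolemy–Plücker relations x_{i,j}·x_{k,ℓ} = x_{i,k}·x_{j,ℓ} + x_{i,ℓ}·x_{k,j} for all 1 ≤ i ≤ k ≤ j ≤ ℓ ≤ n. -/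
/-- The symmetric Ptolemy–Plücker system on `{1,…,n}²` with prescribed
quiddity `c` (1-indexed):
(a) symmetry; (b) `x_{i,i} = 0`; (c) `x_{i,i+1} = 1` for `1 ≤ i ≤ n−1` and
`x_{1,n} = 1`; (d) `x_{i−1,i+1} = c_i` for `2 ≤ i ≤ n−1`, `x_{n,2} = c₁`,
`x_{n−1,1} = c_n`; (e) the Ptolemy–Plücker relations. -/
def SymSys (n : ℕ) (c : ℕ → ℤ) (x : ℕ → ℕ → ℤ) : Prop :=
  (∀ i j, 1 ≤ i → i ≤ n → 1 ≤ j → j ≤ n → x i j = x j i) ∧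
  (∀ i, 1 ≤ i → i ≤ n → x i i = 0) ∧
  (∀ i, 1 ≤ i → i + 1 ≤ n → x i (i + 1) = 1) ∧
  x 1 n = 1 ∧
  (∀ i, 2 ≤ i → i + 1 ≤ n → x (i - 1) (i + 1) = c i) ∧
  x n 2 = c 1 ∧
  x (n - 1) 1 = c n ∧
  (∀ i k j l, 1 ≤ i → i ≤ k → k ≤ j → j ≤ l → l ≤ n →
    x i j * x k l = x i k * x j l + x i l * x k j)

/-!
A solution `x` is rigid: the Ptolemy–Plücker relation for `i ≤ j ≤ j + 1 ≤ j + 2` reads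
`x i (j + 2) = c (j + 1) * x i (j + 1) - x i j`, so `x i j = det (v i, v j)` for `i ≤ j`, where the
vectors `v` satisfy `v (k + 2) = c (k + 1) • v (k + 1) - v k`. Conversely these determinants satisfy
every relation except possibly the three cyclic conditions `x 1 n = 1`, `x n 2 = c 1` and
`x (n - 1) 1 = c n`. Since the columns of `M(c₁, …, c_n)` are `v (n + 1)` and `-v n`, the latter
say exactly that `M(c₁, …, c_n) = -1`.
-/

variable {R : Type*} [CommRing R]

/-- The product `M(c₁, …, c_n)` over an arbitrary commutative ring; over `ℤ` it is `Mneg`. -/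
def quiddityProd (cs : List R) : Matrix (Fin 2) (Fin 2) R :=
  (cs.map fun c => !![c, -1; 1, 0]).prod

/-- The Ptolemy–Plücker system with quiddity `c` over an arbitrary commutative ring; over `ℤ` it is
`SymSys`, with the same 1-based indexing and the same unconstrained values outside `{1, …, n}²`. -/
structure IsPtolemyFrieze (n : ℕ) (c : ℕ → R) (x : ℕ → ℕ → R) : Prop where
  symm : ∀ i j, 1 ≤ i → i ≤ n → 1 ≤ j → j ≤ n → x i j = x j i
  diag : ∀ i, 1 ≤ i → i ≤ n → x i i = 0
  succ : ∀ i, 1 ≤ i → i + 1 ≤ n → x i (i + 1) = 1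
  one_last : x 1 n = 1
  quiddity : ∀ i, 2 ≤ i → i + 1 ≤ n → x (i - 1) (i + 1) = c i
  quiddity_one : x n 2 = c 1
  quiddity_last : x (n - 1) 1 = c n
  ptolemy : ∀ i k j l, 1 ≤ i → i ≤ k → k ≤ j → j ≤ l → l ≤ n →
    x i j * x k l = x i k * x j l + x i l * x k j

theorem symSys_iff_isPtolemyFrieze {n : ℕ} {c : ℕ → ℤ} {x : ℕ → ℕ → ℤ} :
    SymSys n c x ↔ IsPtolemyFrieze n c x :=
  ⟨fun ⟨h₁, h₂, h₃, h₄, h₅, h₆, h₇, h₈⟩ => ⟨h₁, h₂, h₃, h₄, h₅, h₆, h₇, h₈⟩,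
    fun ⟨h₁, h₂, h₃, h₄, h₅, h₆, h₇, h₈⟩ => ⟨h₁, h₂, h₃, h₄, h₅, h₆, h₇, h₈⟩⟩

/-- The vectors `v k` in `R²` solving `v (k + 2) = c (k + 1) • v (k + 1) - v k`; the initial values
are those for which `M(c₁, …, c_k)` has columns `v (k + 1)` and `-v k`. -/
def quiddityVec (c : ℕ → R) : ℕ → R × R
  | 0 => (0, -1)
  | 1 => (1, 0)
  | k + 2 => c (k + 1) • quiddityVec c (k + 1) - quiddityVec c k

/-- The determinant of `v i` and `v j` for `v = quiddityVec c`: the value that the Ptolemy–Plücker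
relations force on `x i j` when `i ≤ j`. -/
def quiddityDet (c : ℕ → R) (i j : ℕ) : R :=
  (quiddityVec c i).1 * (quiddityVec c j).2 - (quiddityVec c j).1 * (quiddityVec c i).2

section quiddityDet

variable (c : ℕ → R)

theorem quiddityDet_self (i : ℕ) : quiddityDet c i i = 0 :=
  sub_self _

theorem quiddityDet_swap (i j : ℕ) : quiddityDet c j i = -quiddityDet c i j :=
  (neg_sub _ _).symm

theorem quiddityDet_add_two_right (i j : ℕ) :
    quiddityDet c i (j + 2) = c (j + 1) * quiddityDet c i (j + 1) - quiddityDet c i j := by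
  simp only [quiddityDet, quiddityVec, Prod.fst_sub, Prod.snd_sub, Prod.smul_fst, Prod.smul_snd,
    smul_eq_mul]
  ring

theorem quiddityDet_add_two_left (i j : ℕ) :
    quiddityDet c (i + 2) j = c (i + 1) * quiddityDet c (i + 1) j - quiddityDet c i j := by
  rw [quiddityDet_swap c j, quiddityDet_add_two_right, quiddityDet_swap c (i + 1) j,
    quiddityDet_swap c i j]
  ring

theorem quiddityDet_succ (i : ℕ) : quiddityDet c i (i + 1) = 1 := by
  induction i with
  | zero => simp [quiddityDet, quiddityVec]
  | succ i ih =>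
    rw [quiddityDet_add_two_right, quiddityDet_self, quiddityDet_swap, ih]
    ring

theorem quiddityDet_add_two_self (i : ℕ) : quiddityDet c i (i + 2) = c (i + 1) := by
  rw [quiddityDet_add_two_right, quiddityDet_succ, quiddityDet_self, mul_one, sub_zero]

theorem quiddityDet_ptolemy (i j k l : ℕ) :
    quiddityDet c i j * quiddityDet c k l =
      quiddityDet c i k * quiddityDet c j l + quiddityDet c i l * quiddityDet c k j := by
  simp only [quiddityDet]
  ring

theorem quiddityProd_range_eq (n : ℕ) :
    quiddityProd ((List.range n).map fun i => c (i + 1)) =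
      !![quiddityDet c 0 (n + 1), -quiddityDet c 0 n;
        quiddityDet c 1 (n + 1), -quiddityDet c 1 n] := by
  induction n with
  | zero =>
    simp [quiddityProd, quiddityDet_self, quiddityDet_succ, quiddityDet_swap c 0 1,
      Matrix.one_fin_two]
  | succ n ih =>
    unfold quiddityProd at ih ⊢
    rw [List.range_succ, List.map_append, List.map_append, List.prod_append, ih]
    simp [quiddityDet_add_two_right, mul_comm, sub_eq_add_neg]

theorem quiddityProd_range_eq_neg_one_iff (m : ℕ) :
    quiddityProd ((List.range (m + 1)).map fun i => c (i + 1)) = -1 ↔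
      quiddityDet c 1 (m + 1) = 1 ∧ quiddityDet c 2 (m + 1) = c 1 ∧
        quiddityDet c 1 m = c (m + 1) := by
  have entries : quiddityProd ((List.range (m + 1)).map fun i => c (i + 1)) = -1 ↔
      (quiddityDet c 0 (m + 2) = -1 ∧ quiddityDet c 0 (m + 1) = 0) ∧
        quiddityDet c 1 (m + 2) = 0 ∧ quiddityDet c 1 (m + 1) = 1 := by
    rw [quiddityProd_range_eq, Matrix.one_fin_two]
    simp
  have left_step : quiddityDet c 2 (m + 1) =
      c 1 * quiddityDet c 1 (m + 1) - quiddityDet c 0 (m + 1) :=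
    quiddityDet_add_two_left c 0 (m + 1)
  have right_step : quiddityDet c 1 (m + 2) =
      c (m + 1) * quiddityDet c 1 (m + 1) - quiddityDet c 1 m :=
    quiddityDet_add_two_right c 1 m
  rw [entries]
  constructor
  · rintro ⟨⟨-, h₀⟩, h₁, h⟩
    rw [h, mul_one] at left_step right_step
    exact ⟨h, by rw [left_step, h₀, sub_zero], by linear_combination right_step - h₁⟩
  · rintro ⟨h, h₂, hm⟩
    rw [h, mul_one] at left_step right_step
    have h₀ : quiddityDet c 0 (m + 1) = 0 := by linear_combination left_step - h₂
    have h₁ : quiddityDet c 1 (m + 2) = 0 := by rw [right_step, hm, sub_self]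
    -- The remaining entry is determined by the other three since the product has determinant `1`.
    have det_eq_one := quiddityDet_ptolemy c 0 1 (m + 1) (m + 2)
    rw [quiddityDet_succ, quiddityDet_succ, h₀, quiddityDet_swap c 1 (m + 1), h] at det_eq_one
    exact ⟨⟨by linear_combination det_eq_one, h₀⟩, h₁, h⟩

end quiddityDet

namespace IsPtolemyFrieze

variable {n : ℕ} {c : ℕ → R} {x y : ℕ → ℕ → R}

theorem apply_add_two (h : IsPtolemyFrieze n c x) {i j : ℕ} (hi : 1 ≤ i) (hij : i ≤ j)
    (hj : j + 2 ≤ n) : x i (j + 2) = c (j + 1) * x i (j + 1) - x i j := by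
  have relation := h.ptolemy i j (j + 1) (j + 2) hi hij (by lia) (by lia) hj
  have hquid : x j (j + 2) = c (j + 1) := h.quiddity (j + 1) (by lia) hj
  rw [hquid, h.succ j (by lia) (by lia), h.succ (j + 1) (by lia) hj] at relation
  linear_combination -relation

theorem eq_quiddityDet (h : IsPtolemyFrieze n c x) {i j : ℕ} (hi : 1 ≤ i) (hij : i ≤ j)
    (hj : j ≤ n) : x i j = quiddityDet c i j := by
  induction j using Nat.strong_induction_on with
  | h j ih =>
    obtain rfl | rfl | ⟨k, hik, rfl⟩ : j = i ∨ j = i + 1 ∨ ∃ k, i ≤ k ∧ j = k + 2 := by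
      by_cases hlt : j < i + 2
      · lia
      · exact .inr (.inr ⟨j - 2, by lia, by lia⟩)
    · rw [h.diag j hi hj, quiddityDet_self]
    · rw [h.succ i hi hj, quiddityDet_succ]
    · rw [h.apply_add_two hi hik hj, quiddityDet_add_two_right,
        ih (k + 1) (by lia) (by lia) (by lia), ih k (by lia) hik (by lia)]

theorem unique (hx : IsPtolemyFrieze n c x) (hy : IsPtolemyFrieze n c y) {i j : ℕ}
    (hi : 1 ≤ i) (hin : i ≤ n) (hj : 1 ≤ j) (hjn : j ≤ n) : x i j = y i j := by
  rcases le_total i j with hij | hji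
  · rw [hx.eq_quiddityDet hi hij hjn, hy.eq_quiddityDet hi hij hjn]
  · rw [hx.symm i j hi hin hj hjn, hy.symm i j hi hin hj hjn, hx.eq_quiddityDet hj hji hin,
      hy.eq_quiddityDet hj hji hin]

end IsPtolemyFrieze

theorem isPtolemyFrieze_quiddityDet_min_max {m : ℕ} (hm : 1 ≤ m) {c : ℕ → R}
    (one_last : quiddityDet c 1 (m + 1) = 1) (two_last : quiddityDet c 2 (m + 1) = c 1)
    (one_penultimate : quiddityDet c 1 m = c (m + 1)) :
    IsPtolemyFrieze (m + 1) c fun i j => quiddityDet c (min i j) (max i j) where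
  symm i j _ _ _ _ := by rw [min_comm, max_comm]
  diag i _ _ := by rw [min_self, max_self, quiddityDet_self]
  succ i _ _ := by simp [quiddityDet_succ]
  one_last := by simpa using one_last
  quiddity i hi _ := by
    obtain ⟨k, rfl⟩ := Nat.exists_eq_add_of_le' (one_le_two.trans hi)
    simpa [add_assoc] using quiddityDet_add_two_self c k
  quiddity_one := by simpa [hm] using two_last
  quiddity_last := by simpa [hm] using one_penultimate
  ptolemy i k j l _ hik hkj hjl _ := by
    simp only [min_eq_left, max_eq_right, hik, hkj, hjl, hik.trans hkj, hkj.trans hjl,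
      (hik.trans hkj).trans hjl]
    exact quiddityDet_ptolemy c i j k l

theorem exists_isPtolemyFrieze_iff {n : ℕ} (hn : 2 ≤ n) (c : ℕ → R) :
    (∃ x, IsPtolemyFrieze n c x) ↔
      quiddityProd ((List.range n).map fun i => c (i + 1)) = -1 := by
  obtain ⟨m, rfl⟩ := Nat.exists_eq_add_of_le' (one_le_two.trans hn)
  have hm : 1 ≤ m := Nat.le_of_succ_le_succ hn
  rw [quiddityProd_range_eq_neg_one_iff]
  refine ⟨fun ⟨x, hx⟩ => ⟨?_, ?_, ?_⟩, fun ⟨h, h₂, h₁⟩ =>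
    ⟨_, isPtolemyFrieze_quiddityDet_min_max hm h h₂ h₁⟩⟩
  · rw [← hx.eq_quiddityDet le_rfl (by lia) le_rfl, hx.one_last]
  · rw [← hx.eq_quiddityDet one_le_two hn le_rfl,
      hx.symm 2 (m + 1) one_le_two hn (by lia) le_rfl, hx.quiddity_one]
  · rw [← hx.eq_quiddityDet le_rfl hm m.le_succ, hx.symm 1 m le_rfl (by lia) hm m.le_succ]
    exact hx.quiddity_last

theorem stmt15_general (n : ℕ) (hn : 2 ≤ n) (c : ℕ → R) :
    ((∃ x : ℕ → ℕ → R, IsPtolemyFrieze n c x) ∧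
      (∀ x y : ℕ → ℕ → R, IsPtolemyFrieze n c x → IsPtolemyFrieze n c y →
        ∀ i j, 1 ≤ i → i ≤ n → 1 ≤ j → j ≤ n → x i j = y i j))
    ↔ quiddityProd ((List.range n).map fun i => c (i + 1)) = -1 := by
  rw [exists_isPtolemyFrieze_iff hn, and_iff_left]
  exact fun _ _ hx hy _ _ => hx.unique hy

/-- for `n ≥ 3` and positive integers `c₁, …, c_n`, the
symmetric Ptolemy–Plücker system has a unique solution
`x : {1,…,n}² → ℤ` if and only if `M(c₁, …, c_n) = −Id`. -/
theorem stmt15 (n : ℕ) (hn : 3 ≤ n) (c : ℕ → ℤ)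
    (hc : ∀ i, 1 ≤ i → i ≤ n → 1 ≤ c i) :
    ((∃ x : ℕ → ℕ → ℤ, SymSys n c x) ∧
      (∀ x y : ℕ → ℕ → ℤ, SymSys n c x → SymSys n c y →
        ∀ i j, 1 ≤ i → i ≤ n → 1 ≤ j → j ≤ n → x i j = y i j))
    ↔ Mneg ((List.range n).map fun i => c (i + 1)) = -1 := by
  simp only [symSys_iff_isPtolemyFrieze]
  exact stmt15_general n (by lia) c
end

section
/- Let n ≥ 3 and let c_1, …, c_n be positive integers. The following system has a unique solution x : {1, …, n} × {1, …, n} → ℤ if and only if M(c_1, …, c_n) = Id: (a) skew-symmetry x_{i,j} = −x_{j,i}; (b) x_{i,i} = 0 for all i; (c) x_{i,i+1} = 1 for 1 ≤ i ≤ n−1 and x_{n,1} = 1 (cyclic convention); (d) x_{i−1,i+1} = c_i for all i, indices taken modulo n (i.e. x_{i−1,i+1} = c_i for 2 ≤ i ≤ n−1, x_{n,2} = c_1, x_{n−1,1} = c_n); (e) the Ptolemy–Plücker relations x_{i,j}·x_{k,ℓ} = x_{i,k}·x_{j,ℓ} + x_{i,ℓ}·x_{k,j} for all 1 ≤ i ≤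 k ≤ j ≤ ℓ ≤ n. -/
/-- The skew-symmetric Ptolemy–Plücker system on `{1,…,n}²` with prescribed
quiddity `c` (1-indexed):
(a) skew-symmetry; (b) `x_{i,i} = 0`; (c) `x_{i,i+1} = 1` for `1 ≤ i ≤ n−1`
and `x_{n,1} = 1`; (d) `x_{i−1,i+1} = c_i` for `2 ≤ i ≤ n−1`, `x_{n,2} = c₁`,
`x_{n−1,1} = c_n`; (e) the Ptolemy–Plücker relations. -/
def SkewSys (n : ℕ) (c : ℕ → ℤ) (x : ℕ → ℕ → ℤ) : Prop :=
  (∀ i j, 1 ≤ i → i ≤ n → 1 ≤ j → j ≤ n → x i j = -x j i) ∧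
  (∀ i, 1 ≤ i → i ≤ n → x i i = 0) ∧
  (∀ i, 1 ≤ i → i + 1 ≤ n → x i (i + 1) = 1) ∧
  x n 1 = 1 ∧
  (∀ i, 2 ≤ i → i + 1 ≤ n → x (i - 1) (i + 1) = c i) ∧
  x n 2 = c 1 ∧
  x (n - 1) 1 = c n ∧
  (∀ i k j l, 1 ≤ i → i ≤ k → k ≤ j → j ≤ l → l ≤ n →
    x i j * x k l = x i k * x j l + x i l * x k j)

/-!
Let `v₀ = (0, -1)`, `v₁ = (1, 0)` and `v_{k+1} = c_k v_k - v_{k-1}`, so that `M(c₁, …, c_n)` has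
columns `v_{n+1}` and `-v_n`. The Ptolemy–Plücker relation on the indices `i, k, k+1, k+2` makes
every row of a solution satisfy this same recurrence; hence `x_{i,j} = det(v_i, v_j)` is the only
candidate. It satisfies every condition that does not wrap around from `n` to `1`, the relations (e)
being the Plücker relation for 2 × 2 determinants. The three conditions that do wrap around say
exactly that `v_n = v₀` and `v_{n+1} = v₁`, which is `M(c₁, …, c_n) = Id`.
-/

section Wedge

variable {R : Type*} [CommRing R]

/-- The determinant `det(u, v)` of two vectors of the plane, through which the solution of the
system is written. Vectors are pairs, so that it is a polynomial in their coordinates. -/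
def wedge (u v : R × R) : R :=
  u.1 * v.2 - u.2 * v.1

theorem wedge_self (u : R × R) : wedge u u = 0 := by
  simp only [wedge]; ring

theorem wedge_swap (u v : R × R) : wedge u v = -wedge v u := by
  simp only [wedge]; ring

theorem wedge_smul_sub_left (a : R) (u v w : R × R) :
    wedge (a • u - v) w = a * wedge u w - wedge v w := by
  simp only [wedge, Prod.fst_sub, Prod.snd_sub, Prod.smul_fst, Prod.smul_snd, smul_eq_mul]; ring

theorem wedge_smul_sub_right (a : R) (u v w : R × R) :
    wedge u (a • v - w) = a * wedge u v - wedge u w := by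
  simp only [wedge, Prod.fst_sub, Prod.snd_sub, Prod.smul_fst, Prod.smul_snd, smul_eq_mul]; ring

theorem wedge_mul_wedge (u v w z : R × R) :
    wedge u w * wedge v z = wedge u v * wedge w z + wedge u z * wedge v w := by
  simp only [wedge]; ring

theorem eq_wedge_smul_sub_wedge_smul {a b : R × R} (hab : wedge a b = 1) (u : R × R) :
    u = wedge u b • a - wedge u a • b := by
  simp only [wedge] at hab ⊢
  ext
  · simp only [Prod.fst_sub, Prod.smul_fst, smul_eq_mul]
    linear_combination -u.1 * hab
  · simp only [Prod.snd_sub, Prod.smul_snd, smul_eq_mul]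
    linear_combination -u.2 * hab

theorem eq_of_wedge_eq {a b u w : R × R} (hab : wedge a b = 1)
    (ha : wedge u a = wedge w a) (hb : wedge u b = wedge w b) : u = w := by
  rw [eq_wedge_smul_sub_wedge_smul hab u, eq_wedge_smul_sub_wedge_smul hab w, ha, hb]

end Wedge

section Quiddity

variable {R : Type*} [CommRing R]

/-- The matrix `M(c₁, …, c_n)` over an arbitrary commutative ring, for a quiddity indexed from 1. -/
def quiddityMatrix (c : ℕ → R) (n : ℕ) : Matrix (Fin 2) (Fin 2) R :=
  ((List.range n).map fun i => !![c (i + 1), -1; 1, 0]).prod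

theorem quiddityVec_add_two (c : ℕ → R) (k : ℕ) :
    quiddityVec c (k + 2) = c (k + 1) • quiddityVec c (k + 1) - quiddityVec c k :=
  rfl

theorem wedge_quiddityVec_add_two (c : ℕ → R) (u : R × R) (k : ℕ) :
    wedge u (quiddityVec c (k + 2)) =
      c (k + 1) * wedge u (quiddityVec c (k + 1)) - wedge u (quiddityVec c k) :=
  wedge_smul_sub_right _ _ _ _

theorem wedge_quiddityVec_succ (c : ℕ → R) (k : ℕ) :
    wedge (quiddityVec c k) (quiddityVec c (k + 1)) = 1 := by
  induction k with
  | zero => simp [quiddityVec, wedge]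
  | succ k ih =>
    rw [wedge_quiddityVec_add_two, wedge_self, wedge_swap, ih]
    ring

theorem wedge_quiddityVec_self_add_two (c : ℕ → R) (k : ℕ) :
    wedge (quiddityVec c k) (quiddityVec c (k + 2)) = c (k + 1) := by
  rw [wedge_quiddityVec_add_two, wedge_quiddityVec_succ, wedge_self, mul_one, sub_zero]

theorem quiddityVec_closes_iff (c : ℕ → R) (n : ℕ) :
    (quiddityVec c (n + 1) = quiddityVec c 0 ∧ quiddityVec c (n + 2) = quiddityVec c 1) ↔
      wedge (quiddityVec c (n + 1)) (quiddityVec c 1) = 1 ∧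
      wedge (quiddityVec c (n + 1)) (quiddityVec c 2) = c 1 ∧
      wedge (quiddityVec c n) (quiddityVec c 1) = c (n + 1) := by
  constructor
  · rintro ⟨h₀, h₁⟩
    refine ⟨?_, ?_, ?_⟩
    · rw [h₀, wedge_quiddityVec_succ]
    · rw [h₀, wedge_quiddityVec_self_add_two]
    · rw [← h₁, wedge_quiddityVec_self_add_two]
  · rintro ⟨h₁, h₂, h₃⟩
    constructor
    · refine eq_of_wedge_eq (wedge_quiddityVec_succ c 1) ?_ ?_
      · rw [h₁, wedge_quiddityVec_succ]
      · rw [h₂, wedge_quiddityVec_self_add_two]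
    · refine eq_of_wedge_eq h₁ ?_ ?_
      · rw [wedge_swap, wedge_quiddityVec_succ, wedge_swap, h₁]
      · rw [quiddityVec_add_two, wedge_smul_sub_left, h₁, h₃, wedge_self, mul_one, sub_self]

theorem quiddityMatrix_succ (c : ℕ → R) (n : ℕ) :
    quiddityMatrix c (n + 1) = quiddityMatrix c n * !![c (n + 1), -1; 1, 0] := by
  simp [quiddityMatrix, List.range_succ]

theorem quiddityMatrix_eq (c : ℕ → R) (n : ℕ) :
    quiddityMatrix c n =
      !![(quiddityVec c (n + 1)).1, -(quiddityVec c n).1;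
         (quiddityVec c (n + 1)).2, -(quiddityVec c n).2] := by
  induction n with
  | zero => simp [quiddityMatrix, quiddityVec, Matrix.one_fin_two]
  | succ n ih =>
    rw [quiddityMatrix_succ, ih, Matrix.mul_fin_two, quiddityVec_add_two]
    simp [sub_eq_add_neg, mul_comm]

theorem quiddityMatrix_eq_one_iff (c : ℕ → R) (n : ℕ) :
    quiddityMatrix c n = 1 ↔
      quiddityVec c n = quiddityVec c 0 ∧ quiddityVec c (n + 1) = quiddityVec c 1 := by
  simp only [quiddityMatrix_eq, Matrix.one_fin_two, quiddityVec, Prod.ext_iff,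
    EmbeddingLike.apply_eq_iff_eq, Matrix.vecCons_inj, neg_eq_iff_eq_neg, neg_zero]
  tauto

end Quiddity

/-- The skew-symmetric Ptolemy–Plücker system of `SkewSys`, with values in an arbitrary commutative
ring. -/
structure IsSkewPtolemy {R : Type*} [CommRing R] (n : ℕ) (c : ℕ → R) (x : ℕ → ℕ → R) : Prop where
  skew : ∀ i j, 1 ≤ i → i ≤ n → 1 ≤ j → j ≤ n → x i j = -x j i
  diag : ∀ i, 1 ≤ i → i ≤ n → x i i = 0
  succ : ∀ i, 1 ≤ i → i + 1 ≤ n → x i (i + 1) = 1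
  last_one : x n 1 = 1
  quiddity : ∀ i, 2 ≤ i → i + 1 ≤ n → x (i - 1) (i + 1) = c i
  last_two : x n 2 = c 1
  pred_last_one : x (n - 1) 1 = c n
  ptolemy : ∀ i k j l, 1 ≤ i → i ≤ k → k ≤ j → j ≤ l → l ≤ n →
    x i j * x k l = x i k * x j l + x i l * x k j

namespace IsSkewPtolemy

variable {R : Type*} [CommRing R] {n : ℕ} {c : ℕ → R} {x : ℕ → ℕ → R}

theorem apply_add_two (h : IsSkewPtolemy n c x) {i k : ℕ} (hi : 1 ≤ i) (hik : i ≤ k)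
    (hk : k + 2 ≤ n) :
    x i (k + 2) = c (k + 1) * x i (k + 1) - x i k := by
  have hrel := h.ptolemy i k (k + 1) (k + 2) hi hik (by lia) (by lia) hk
  have hc : x k (k + 2) = c (k + 1) := h.quiddity (k + 1) (by lia) hk
  rw [hc, h.succ k (by lia) (by lia), h.succ (k + 1) (by lia) hk] at hrel
  linear_combination -hrel

theorem apply_add_eq_wedge (h : IsSkewPtolemy n c x) {i : ℕ} (hi : 1 ≤ i) (k : ℕ)
    (hk : i + k ≤ n) :
    x i (i + k) = wedge (quiddityVec c i) (quiddityVec c (i + k)) := by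
  induction k using Nat.twoStepInduction with
  | zero => exact (h.diag i hi hk).trans (wedge_self _).symm
  | one => exact (h.succ i hi hk).trans (wedge_quiddityVec_succ c i).symm
  | more k ih₀ ih₁ =>
    calc x i (i + k + 2)
        = c (i + k + 1) * x i (i + k + 1) - x i (i + k) := h.apply_add_two hi (by lia) hk
      _ = wedge (quiddityVec c i) (quiddityVec c (i + k + 2)) := by
          rw [wedge_quiddityVec_add_two, ih₀ (by lia), add_assoc i k 1, ih₁ (by lia)]

theorem eq_wedge (h : IsSkewPtolemy n c x) {i j : ℕ} (hi : 1 ≤ i) (hin : i ≤ n) (hj : 1 ≤ j)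
    (hjn : j ≤ n) : x i j = wedge (quiddityVec c i) (quiddityVec c j) := by
  rcases le_total i j with hij | hji
  · obtain ⟨k, rfl⟩ := Nat.exists_eq_add_of_le hij
    exact h.apply_add_eq_wedge hi k hjn
  · obtain ⟨k, rfl⟩ := Nat.exists_eq_add_of_le hji
    rw [h.skew _ _ hi hin hj hjn, h.apply_add_eq_wedge hj k hin, ← wedge_swap]

theorem quiddityMatrix_eq_one (h : IsSkewPtolemy n c x) (hn : 2 ≤ n) :
    quiddityMatrix c n = 1 := by
  obtain ⟨m, rfl⟩ := Nat.exists_eq_add_of_le' (one_le_two.trans hn)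
  rw [quiddityMatrix_eq_one_iff, quiddityVec_closes_iff]
  refine ⟨?_, ?_, ?_⟩
  · rw [← h.eq_wedge (by lia) le_rfl le_rfl (by lia), h.last_one]
  · rw [← h.eq_wedge (by lia) le_rfl one_le_two hn, h.last_two]
  · rw [← h.eq_wedge (by lia) (by lia) le_rfl (by lia)]
    exact h.pred_last_one

end IsSkewPtolemy

theorem isSkewPtolemy_wedge_quiddityVec {R : Type*} [CommRing R] {n : ℕ} {c : ℕ → R} (hn : 1 ≤ n)
    (hM : quiddityMatrix c n = 1) :
    IsSkewPtolemy n c fun i j => wedge (quiddityVec c i) (quiddityVec c j) := by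
  obtain ⟨m, rfl⟩ := Nat.exists_eq_add_of_le' hn
  rw [quiddityMatrix_eq_one_iff, quiddityVec_closes_iff] at hM
  obtain ⟨hlast_one, hlast_two, hpred_last_one⟩ := hM
  exact
    { skew := fun _ _ _ _ _ _ => wedge_swap _ _
      diag := fun _ _ _ => wedge_self _
      succ := fun i _ _ => wedge_quiddityVec_succ c i
      last_one := hlast_one
      quiddity := fun i hi _ => by
        obtain ⟨k, rfl⟩ := Nat.exists_eq_add_of_le' (one_le_two.trans hi)
        exact wedge_quiddityVec_self_add_two c k
      last_two := hlast_two
      pred_last_one := hpred_last_one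
      ptolemy := fun _ _ _ _ _ _ _ _ _ => wedge_mul_wedge _ _ _ _ }

theorem stmt16_general {R : Type*} [CommRing R] (n : ℕ) (hn : 2 ≤ n) (c : ℕ → R) :
    ((∃ x : ℕ → ℕ → R, IsSkewPtolemy n c x) ∧
      (∀ x y : ℕ → ℕ → R, IsSkewPtolemy n c x → IsSkewPtolemy n c y →
        ∀ i j, 1 ≤ i → i ≤ n → 1 ≤ j → j ≤ n → x i j = y i j))
    ↔ quiddityMatrix c n = 1 := by
  constructor
  · rintro ⟨⟨x, hx⟩, -⟩
    exact hx.quiddityMatrix_eq_one hn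
  · intro hM
    refine ⟨⟨_, isSkewPtolemy_wedge_quiddityVec (one_le_two.trans hn) hM⟩, ?_⟩
    intro x y hx hy i j hi hin hj hjn
    rw [hx.eq_wedge hi hin hj hjn, hy.eq_wedge hi hin hj hjn]

theorem skewSys_iff {n : ℕ} {c : ℕ → ℤ} {x : ℕ → ℕ → ℤ} :
    SkewSys n c x ↔ IsSkewPtolemy n c x :=
  ⟨fun ⟨hskew, hdiag, hsucc, hlast_one, hquid, hlast_two, hpred, hptolemy⟩ =>
    ⟨hskew, hdiag, hsucc, hlast_one, hquid, hlast_two, hpred, hptolemy⟩,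
   fun h => ⟨h.skew, h.diag, h.succ, h.last_one, h.quiddity, h.last_two, h.pred_last_one,
    h.ptolemy⟩⟩

theorem Mneg_map_range (c : ℕ → ℤ) (n : ℕ) :
    Mneg ((List.range n).map fun i => c (i + 1)) = quiddityMatrix c n := by
  rw [Mneg, List.map_map]
  rfl

/-- for `n ≥ 3` and positive integers `c₁, …, c_n`, the
skew-symmetric Ptolemy–Plücker system has a unique solution
`x : {1,…,n}² → ℤ` if and only if `M(c₁, …, c_n) = Id`. -/
theorem stmt16 (n : ℕ) (hn : 3 ≤ n) (c : ℕ → ℤ)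
    (hc : ∀ i, 1 ≤ i → i ≤ n → 1 ≤ c i) :
    ((∃ x : ℕ → ℕ → ℤ, SkewSys n c x) ∧
      (∀ x y : ℕ → ℕ → ℤ, SkewSys n c x → SkewSys n c y →
        ∀ i j, 1 ≤ i → i ≤ n → 1 ≤ j → j ≤ n → x i j = y i j))
    ↔ Mneg ((List.range n).map fun i => c (i + 1)) = 1 := by
  simpa only [skewSys_iff, Mneg_map_range] using stmt16_general n (by lia) c
end

section
/- Let n ≥ 2 and let c_1, …, c_n be integers. Let C be the symmetric tridiagonal n×n matrix with diagonal entries c_1, …, c_n and all sub- and super-diagonal entries equal to 1, and let T be the n×n matrix whose only nonzero entries are T_{1,n} = 1 and T_{n,1} = −1. Then the determinant of the skew-symmetric 2n×2n block matrix Ω = [[T, C], [−C, T]] equals (tr M(c_1, …, c_n))²; equivalently, the Pfaffian of Ω is ± tr M(c_1, …, c_n). -/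
/-- The symmetric tridiagonal `n×n` matrix with diagonal `c₁, …, c_n` and all
sub- and super-diagonal entries equal to `1`. -/
def triDiag (n : ℕ) (c : Fin n → ℤ) : Matrix (Fin n) (Fin n) ℤ :=
  Matrix.of fun i j =>
    if i = j then c i
    else if (i : ℕ) + 1 = (j : ℕ) ∨ (j : ℕ) + 1 = (i : ℕ) then 1
    else 0

/-- The `n×n` matrix whose only nonzero entries are `T_{1,n} = 1` and
`T_{n,1} = −1` (0-indexed: `T 0 (n−1) = 1`, `T (n−1) 0 = −1`). -/
def cornerT (n : ℕ) : Matrix (Fin n) (Fin n) ℤ :=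
  Matrix.of fun i j =>
    if (i : ℕ) = 0 ∧ (j : ℕ) = n - 1 then 1
    else if (i : ℕ) = n - 1 ∧ (j : ℕ) = 0 then -1
    else 0

/-!
If `i ^ 2 = -1`, block elimination with multiples of `i` gives
`det Ω = det (T + iC) * det (T - iC)`, and both factors are, up to powers of `±i`, determinants of
periodic Jacobi matrices `C + xE₁ₙ - xEₙ₁` with `x = ∓i`. Expanding such a determinant in its two
corners, the terms linear in the corner entries cancel and the quadratic term is
`x ^ 2 * K(c₂, …, cₙ₋₁)`, which leaves `K(c₁, …, cₙ) - K(c₂, …, cₙ₋₁)`; here `K(c)` is the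
continuant, the determinant of the tridiagonal matrix. The entries of `M(c₁, …, cₙ)` are continuants
too, and this difference is its trace. A square root of `-1` can be adjoined to any commutative
ring.
-/

open Matrix

section Determinants

variable {R : Type*} [CommRing R]

lemma det_add_single {n : ℕ} (A : Matrix (Fin (n + 1)) (Fin (n + 1)) R) (i j : Fin (n + 1))
    (a : R) : (A + single i j a).det
      = A.det + (-1) ^ (i + j : ℕ) * a * (A.submatrix i.succAbove j.succAbove).det := by
  have eq_updateRow : A + single i j a = A.updateRow i (A i + a • Pi.single j 1) := by
    ext k l
    by_cases hk : k = i
    · subst hk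
      simp [single_apply, Pi.single_apply, eq_comm]
    · simp [updateRow_ne hk, single_apply_of_row_ne (Ne.symm hk)]
  rw [eq_updateRow, det_updateRow_add, updateRow_eq_self, det_updateRow_smul, ← adjugate_apply,
    adjugate_fin_succ_eq_det_submatrix]
  ring

lemma submatrix_single_of_injective {l m n o α : Type*} [DecidableEq l] [DecidableEq m]
    [DecidableEq n] [DecidableEq o] [Zero α] {f : l → n} {g : m → o} (hf : f.Injective)
    (hg : g.Injective) (i : l) (j : m) (a : α) :
    (single (f i) (g j) a).submatrix f g = single i j a := by
  ext k k'
  simp [single_apply, hf.eq_iff, hg.eq_iff]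

lemma det_fromBlocks_neg_of_mul_self_eq_neg_one {m : Type*} [Fintype m] [DecidableEq m]
    (A B : Matrix m m R) {x : R} (hx : x * x = -1) :
    (fromBlocks A B (-B) A).det = (A + x • B).det * (A - x • B).det := by
  have elimination : fromBlocks 1 0 (-(x • 1)) 1 * fromBlocks A B (-B) A * fromBlocks 1 0 (x • 1) 1
      = fromBlocks (A + x • B) B 0 (A - x • B) := by
    have lowerLeft : -B - x • A + x • (A - x • B) = 0 := by
      rw [smul_sub, smul_smul, hx]
      module
    simp only [fromBlocks_multiply]
    congr 1 <;> simp [lowerLeft, neg_add_eq_sub]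
  simpa using congrArg det elimination

end Determinants

section Tridiagonal

variable {R : Type*}

/-- The tridiagonal (Jacobi) matrix with diagonal `c` and off-diagonal entries `1`: `triDiag` over
an arbitrary ring of coefficients. Its determinant is the continuant of `c`. -/
def tridiagonal [Zero R] [One R] {n : ℕ} (c : Fin n → R) : Matrix (Fin n) (Fin n) R :=
  of fun i j =>
    if i = j then c i
    else if (i : ℕ) + 1 = (j : ℕ) ∨ (j : ℕ) + 1 = (i : ℕ) then 1
    else 0

lemma tridiagonal_map {S : Type*} [NonAssocSemiring R] [NonAssocSemiring S] (f : R →+* S) {n : ℕ}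
    (c : Fin n → R) : (tridiagonal c).map f = tridiagonal (f ∘ c) := by
  ext i j
  simp [tridiagonal, apply_ite f]

lemma tridiagonal_submatrix_succ_succ [Zero R] [One R] {n : ℕ} (c : Fin (n + 1) → R) :
    (tridiagonal c).submatrix Fin.succ Fin.succ = tridiagonal (Fin.tail c) := by
  ext i j
  simp [tridiagonal, Fin.tail]

lemma tridiagonal_submatrix_castSucc_castSucc [Zero R] [One R] {n : ℕ} (c : Fin (n + 1) → R) :
    (tridiagonal c).submatrix Fin.castSucc Fin.castSucc = tridiagonal (Fin.init c) := by
  ext i j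
  simp [tridiagonal, Fin.init]

lemma tridiagonal_transpose [Zero R] [One R] {n : ℕ} (c : Fin n → R) :
    (tridiagonal c)ᵀ = tridiagonal c := by
  ext i j
  simp only [tridiagonal, transpose_apply, of_apply]
  grind

variable [CommRing R] {n : ℕ}

lemma det_tridiagonal_submatrix_castSucc_succ (c : Fin (n + 1) → R) :
    ((tridiagonal c).submatrix Fin.castSucc Fin.succ).det = 1 := by
  rw [det_of_isLowerTriangular]
  · simp [tridiagonal, Fin.ext_iff]
  · intro i j h
    have h : (i : ℕ) < j := h
    simp only [tridiagonal, Fin.ext_iff, submatrix_apply, of_apply, Fin.val_castSucc, Fin.val_succ]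
    grind

lemma det_tridiagonal_submatrix_succ_castSucc (c : Fin (n + 1) → R) :
    ((tridiagonal c).submatrix Fin.succ Fin.castSucc).det = 1 := by
  rw [← det_transpose, transpose_submatrix, tridiagonal_transpose,
    det_tridiagonal_submatrix_castSucc_succ]

lemma det_tridiagonal_submatrix_succ_succAbove_one (c : Fin (n + 2) → R) :
    ((tridiagonal c).submatrix Fin.succ (Fin.succAbove 1)).det
      = (tridiagonal (Fin.tail (Fin.tail c))).det := by
  have minor : ((tridiagonal c).submatrix Fin.succ (Fin.succAbove 1)).submatrix Fin.succ Fin.succ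
      = tridiagonal (Fin.tail (Fin.tail c)) := by
    rw [← tridiagonal_submatrix_succ_succ, ← tridiagonal_submatrix_succ_succ, submatrix_submatrix,
      submatrix_submatrix]
    congr 1
  rw [det_succ_column_zero, Fin.sum_univ_succ, Finset.sum_eq_zero, Fin.succAbove_zero, minor]
  · simp [tridiagonal]
  · intro i _
    simp [tridiagonal, Fin.ext_iff]

lemma det_tridiagonal_add_two (c : Fin (n + 2) → R) :
    (tridiagonal c).det
      = c 0 * (tridiagonal (Fin.tail c)).det - (tridiagonal (Fin.tail (Fin.tail c))).det := by
  have entry_zero_zero : tridiagonal c 0 0 = c 0 := by simp [tridiagonal]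
  have entry_zero_one : tridiagonal c 0 1 = 1 := by simp [tridiagonal]
  rw [det_succ_row_zero, Fin.sum_univ_succ, Fin.sum_univ_succ, Finset.sum_eq_zero,
    Fin.succAbove_zero, Fin.succ_zero_eq_one, tridiagonal_submatrix_succ_succ,
    det_tridiagonal_submatrix_succ_succAbove_one, entry_zero_zero, entry_zero_one]
  · simp [sub_eq_add_neg]
  · intro i _
    simp [tridiagonal, Fin.ext_iff]

theorem det_tridiagonal_add_corners (c : Fin (n + 2) → R) (a b : R) :
    (tridiagonal c + single 0 (Fin.last _) a + single (Fin.last _) 0 b).det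
      = (tridiagonal c).det - a * b * (tridiagonal (Fin.tail (Fin.init c))).det
        - (-1) ^ n * (a + b) := by
  have upperCorner : (tridiagonal c + single 0 (Fin.last _) a).det
      = (tridiagonal c).det - (-1) ^ n * a := by
    rw [det_add_single, Fin.succAbove_zero, Fin.succAbove_last,
      det_tridiagonal_submatrix_succ_castSucc]
    simp [pow_succ, sub_eq_add_neg]
  have lowerMinor : ((tridiagonal c + single 0 (Fin.last _) a).submatrix Fin.castSucc Fin.succ).det
      = 1 + (-1) ^ n * a * (tridiagonal (Fin.tail (Fin.init c))).det := by
    have corner := submatrix_single_of_injective (Fin.castSucc_injective (n + 1))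
      (Fin.succ_injective (n + 1)) 0 (Fin.last n) a
    rw [Fin.castSucc_zero, Fin.succ_last] at corner
    have inner : ((tridiagonal c).submatrix Fin.castSucc Fin.succ).submatrix Fin.succ Fin.castSucc
        = tridiagonal (Fin.tail (Fin.init c)) := by
      rw [← tridiagonal_submatrix_succ_succ, ← tridiagonal_submatrix_castSucc_castSucc]
      rfl
    rw [submatrix_add, Pi.add_apply, Pi.add_apply, corner, det_add_single, Fin.succAbove_zero,
      Fin.succAbove_last, inner, det_tridiagonal_submatrix_castSucc_succ]
    simp
  rw [det_add_single, Fin.succAbove_zero, Fin.succAbove_last, upperCorner, lowerMinor]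
  have sign_mul_self : (-1 : R) ^ n * (-1) ^ n = 1 := by rw [← mul_pow]; simp
  simp only [Fin.val_zero, Fin.val_last, add_zero, pow_succ]
  linear_combination -a * b * (tridiagonal (Fin.tail (Fin.init c))).det * sign_mul_self

end Tridiagonal

section Monodromy

variable {R : Type*} [CommRing R]

/-- The matrix `M(c₁, …, cₙ)`, that is `Mneg` over an arbitrary commutative ring. It is the
monodromy of the discrete Hill equation `v (k - 1) + v (k + 1) = c k * v k`. -/
def monodromy (cs : List R) : Matrix (Fin 2) (Fin 2) R :=
  (cs.map fun c => !![c, -1; 1, 0]).prod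

lemma monodromy_map {S : Type*} [CommRing S] (f : R →+* S) (cs : List R) :
    (monodromy cs).map f = monodromy (cs.map f) := by
  simp only [monodromy, ← RingHom.mapMatrix_apply, map_list_prod, List.map_map]
  congr 2
  ext c i j
  fin_cases i <;> fin_cases j <;> simp

lemma monodromy_cons (a : R) (cs : List R) :
    monodromy (a :: cs) = !![a, -1; 1, 0] * monodromy cs := by
  simp [monodromy]

lemma monodromy_cons_zero (a : R) (cs : List R) (j : Fin 2) :
    monodromy (a :: cs) 0 j = a * monodromy cs 0 j - monodromy cs 1 j := by
  simp [monodromy_cons, mul_apply, Fin.sum_univ_two, sub_eq_add_neg]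

lemma monodromy_cons_one (a : R) (cs : List R) (j : Fin 2) :
    monodromy (a :: cs) 1 j = monodromy cs 0 j := by
  simp [monodromy_cons, mul_apply, Fin.sum_univ_two]

lemma monodromy_append_singleton_one (cs : List R) (a : R) (i : Fin 2) :
    monodromy (cs ++ [a]) i 1 = -monodromy cs i 0 := by
  simp [monodromy, mul_apply, Fin.sum_univ_two]

theorem monodromy_ofFn_zero_zero : ∀ {n : ℕ} (c : Fin n → R),
    monodromy (List.ofFn c) 0 0 = (tridiagonal c).det
  | 0, _ => by simp [monodromy]
  | 1, _ => by simp [monodromy, tridiagonal]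
  | n + 2, c => by
    rw [det_tridiagonal_add_two, ← monodromy_ofFn_zero_zero (Fin.tail c),
      ← monodromy_ofFn_zero_zero (Fin.tail (Fin.tail c)), List.ofFn_succ, monodromy_cons_zero]
    congr 1
    rw [List.ofFn_succ, monodromy_cons_one]
    rfl

theorem trace_monodromy_ofFn {n : ℕ} (c : Fin (n + 2) → R) :
    (monodromy (List.ofFn c)).trace
      = (tridiagonal c).det - (tridiagonal (Fin.tail (Fin.init c))).det := by
  have lowerRight : monodromy (List.ofFn c) 1 1
      = -(tridiagonal (Fin.tail (Fin.init c))).det := by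
    rw [List.ofFn_succ_last, monodromy_append_singleton_one, List.ofFn_succ, monodromy_cons_one,
      ← monodromy_ofFn_zero_zero]
    rfl
  rw [trace_fin_two, monodromy_ofFn_zero_zero, lowerRight, sub_eq_add_neg]

end Monodromy

section SkewCorners

variable {R : Type*}

/-- The matrix of size `n + 2` whose only nonzero entries are `1` in the upper right and `-1` in the
lower left corner: `cornerT` over an arbitrary ring. The size `n + 2` makes the two corners distinct
off-diagonal positions. -/
def skewCorners (R : Type*) [Ring R] (n : ℕ) : Matrix (Fin (n + 2)) (Fin (n + 2)) R :=
  single 0 (Fin.last _) 1 - single (Fin.last _) 0 1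

lemma skewCorners_map {S : Type*} [Ring R] [Ring S] (f : R →+* S) (n : ℕ) :
    (skewCorners R n).map f = skewCorners S n := by
  simp [skewCorners, Matrix.map_sub, map_single]

lemma cornerT_add_two (n : ℕ) : cornerT (n + 2) = skewCorners ℤ n := by
  ext i j
  simp only [cornerT, skewCorners, of_apply, Matrix.sub_apply, single_apply]
  grind

variable [CommRing R] {n : ℕ}

theorem det_tridiagonal_add_smul_skewCorners (c : Fin (n + 2) → R) {x : R} (hx : x * x = -1) :
    (tridiagonal c + x • skewCorners R n).det = (monodromy (List.ofFn c)).trace := by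
  have corners : tridiagonal c + x • skewCorners R n
      = tridiagonal c + single 0 (Fin.last _) x + single (Fin.last _) 0 (-x) := by
    simp [skewCorners, smul_single, single_neg, sub_eq_add_neg, add_assoc]
  rw [corners, det_tridiagonal_add_corners, trace_monodromy_ofFn]
  linear_combination (tridiagonal (Fin.tail (Fin.init c))).det * hx

lemma det_fromBlocks_skewCorners_tridiagonal_of_mul_self_eq_neg_one (c : Fin (n + 2) → R) {x : R}
    (hx : x * x = -1) :
    (fromBlocks (skewCorners R n) (tridiagonal c) (-tridiagonal c) (skewCorners R n)).det
      = (monodromy (List.ofFn c)).trace ^ 2 := by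
  have factor_add : skewCorners R n + x • tridiagonal c
      = x • (tridiagonal c + -x • skewCorners R n) := by
    simp [smul_smul, hx, add_comm]
  have factor_sub : skewCorners R n - x • tridiagonal c
      = -x • (tridiagonal c + x • skewCorners R n) := by
    simp [smul_smul, hx, sub_eq_neg_add]
  have pow_mul_pow_eq_one : x ^ (n + 2) * (-x) ^ (n + 2) = 1 := by
    rw [← mul_pow, mul_neg, hx, neg_neg, one_pow]
  rw [det_fromBlocks_neg_of_mul_self_eq_neg_one _ _ hx, factor_add, factor_sub, det_smul, det_smul,
    det_tridiagonal_add_smul_skewCorners c hx,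
    det_tridiagonal_add_smul_skewCorners c ((neg_mul_neg x x).trans hx), Fintype.card_fin]
  linear_combination (monodromy (List.ofFn c)).trace ^ 2 * pow_mul_pow_eq_one

theorem stmt17_general (c : Fin (n + 2) → R) :
    (fromBlocks (skewCorners R n) (tridiagonal c) (-tridiagonal c) (skewCorners R n)).det
      = (monodromy (List.ofFn c)).trace ^ 2 := by
  let f := algebraMap R (QuadraticAlgebra R (-1) 0)
  have omega_mul_self : (QuadraticAlgebra.omega : QuadraticAlgebra R (-1) 0)
      * QuadraticAlgebra.omega = -1 := by
    simp [QuadraticAlgebra.omega_mul_omega_eq_add]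
  have neg_map : (-tridiagonal c).map f = -tridiagonal (f ∘ c) := by
    rw [← tridiagonal_map, Matrix.map_neg f (map_neg f)]
  apply QuadraticAlgebra.algebraMap_injective (a := (-1 : R)) (b := 0)
  change f _ = f _
  rw [RingHom.map_det, RingHom.mapMatrix_apply, fromBlocks_map, skewCorners_map, neg_map,
    tridiagonal_map, map_pow, AddMonoidHom.map_trace, monodromy_map, List.map_ofFn]
  exact det_fromBlocks_skewCorners_tridiagonal_of_mul_self_eq_neg_one (f ∘ c) omega_mul_self

end SkewCorners

/-- for `n ≥ 2` and integers `c₁, …, c_n`, the determinant of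
the skew-symmetric `2n×2n` block matrix `Ω = [[T, C], [−C, T]]` equals
`(tr M(c₁, …, c_n))²` (equivalently, the Pfaffian of `Ω` is
`± tr M(c₁, …, c_n)`). -/
theorem stmt17 (n : ℕ) (hn : 2 ≤ n) (c : Fin n → ℤ) :
    (Matrix.fromBlocks (cornerT n) (triDiag n c) (-(triDiag n c)) (cornerT n)).det
      = (Matrix.trace (Mneg (List.ofFn c))) ^ 2 := by
  obtain ⟨m, rfl⟩ := Nat.exists_eq_add_of_le' hn
  exact cornerT_add_two m ▸ stmt17_general c
end
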